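/- Let I be a monomial ideal in S = K[x₁,…,xₙ] and, for i ≥ 0, let a_i(S/I) denote the number of monomials m with β_{i,m}(S/I) ≠ 0. Then for all integers i₁, i₂ ≥ 0, a_{i₁+i₂}(S/I) ≤ a_{i₁}(S/I) · a_{i₂}(S/I). -/

import Mathlib

open Finsupp

noncomputable section

variable (K : Type) [Field K]

section Core
variable (P : Type) [Preorder P]

/-- Order chains with `n` elements of the poset `P`, written as strictly
decreasing tuples `(x₀ > x₁ > ⋯ > x_{n-1})`. -/
def OChain (n : ℕ) : Type := {c : Fin n → P // StrictAnti c}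

/-- The chain group in "level" `n`: the `K`-vector space with basis the order chains with
`n` elements.  Level `n` corresponds to homological degree `n - 1`; in particular
`CGrp K P 0 ≅ K` is the reduced part `C̃₋₁`. -/
abbrev CGrp (n : ℕ) : Type := OChain P n →₀ K

/-- Deletion of the `k`-th entry of an order chain. -/
def odel {n : ℕ} (k : Fin (n + 1)) (c : OChain P (n + 1)) : OChain P n :=
  ⟨c.1 ∘ k.succAbove, c.2.comp_strictMono (Fin.strictMono_succAbove k)⟩

/-- The simplicial boundary map (of the reduced simplicial chain complex of the order
complex), from level `n+1` to level `n`. -/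
def cbdry (n : ℕ) : CGrp K P (n + 1) →ₗ[K] CGrp K P n :=
  Finsupp.lsum K fun c => ∑ k : Fin (n + 1), ((-1 : K) ^ (k : ℕ)) • Finsupp.lsingle (odel P k c)

/-- The cycles in level `n` (every level-0 chain, i.e. multiple of the empty chain,
is a cycle). -/
def cyclesAt : (n : ℕ) → Submodule K (CGrp K P n)
  | 0 => ⊤
  | (n + 1) => LinearMap.ker (cbdry K P n)

/-- The boundaries in level `n`. -/
def boundariesIn (n : ℕ) : Submodule K (CGrp K P n) :=
  LinearMap.range (cbdry K P n)

/-- `H̃_{n-1}(P) ≠ 0`: nontriviality of the reduced simplicial homology (with coefficients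
in `K`) of the order complex of `P` in degree `n - 1` (level `n`). -/
def RHomNontrivial (n : ℕ) : Prop := ¬ cyclesAt K P n ≤ boundariesIn K P n

end Core


section Monomial

variable (nv : ℕ)

/-- The polynomial ring `S = K[x₁, …, xₙ]`. -/
abbrev PolyS : Type := MvPolynomial (Fin nv) K

/-- The monomial `x^d` attached to an exponent vector `d`. -/
def monOf (d : Fin nv → ℕ) : PolyS K nv :=
  MvPolynomial.monomial (Finsupp.equivFunOnFinite.symm d) 1

/-- `I` is a monomial ideal: it is generated by monomials. -/
def IsMonomialIdeal (I : Ideal (PolyS K nv)) : Prop :=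
  ∃ G : Set (Fin nv → ℕ), I = Ideal.span (monOf K nv '' G)

/-- The minimal monomial generating set `G(I)` of a monomial ideal: exponent vectors of
the monomials of `I` that are minimal with respect to divisibility. -/
def minGens (I : Ideal (PolyS K nv)) : Set (Fin nv → ℕ) :=
  {d | monOf K nv d ∈ I ∧ ∀ d' < d, monOf K nv d' ∉ I}

/-- The underlying set of the LCM-lattice of a monomial ideal: all least common multiples
(= pointwise suprema of exponent vectors) of subsets of the minimal generators, ordered by
divisibility (= the pointwise order).  The empty subset contributes `lcm ∅ = 1`, i.e. the
zero exponent vector. -/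
def lcmSet (I : Ideal (PolyS K nv)) : Set (Fin nv → ℕ) :=
  {m | ∃ B : Finset (Fin nv → ℕ), ↑B ⊆ minGens K nv I ∧ m = B.sup id}

/-- The open interval `(1, m)` in the LCM-lattice of `I`. -/
def openInt (I : Ideal (PolyS K nv)) (m : Fin nv → ℕ) : Set (Fin nv → ℕ) :=
  {p | p ∈ lcmSet K nv I ∧ 0 < p ∧ p < m}

/-- Total degree of a monomial given by its exponent vector. -/
def degTot (m : Fin nv → ℕ) : ℕ := ∑ r, m r

open Classical in
/-- The multigraded Betti number `β_{i,m}(S/I) = dim_K Tor_i^S(S/I, K)_m` of a monomial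
ideal, via the Gasharov–Peeva–Welker formula: for `i ≥ 1` and `m` in the LCM-lattice,
`β_{i,m}(S/I) = dim_K H̃_{i-2}((1, m))` (reduced homology of the order complex of the open
interval in the LCM-lattice; degree `i-2` is level `i-1`; the dimension of the homology is
the dimension of the cycles minus the dimension of the boundaries); moreover `β_{0,m} = 1` iff
`m = 1`, and `β_{i,m} = 0` for `m` outside the LCM-lattice. -/
noncomputable def multiBetti (I : Ideal (PolyS K nv)) (i : ℕ) (m : Fin nv → ℕ) : ℕ :=
  if i = 0 then (if m = 0 then 1 else 0)
  else if m ∈ lcmSet K nv I ∧ m ≠ 0 then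
    Module.finrank K ↥(cyclesAt K ↥(openInt K nv I m) (i - 1)) -
      Module.finrank K ↥(boundariesIn K ↥(openInt K nv I m) (i - 1))
  else 0

/-- The graded Betti number `β_{i,j}(S/I) = dim_K Tor_i^S(S/I, K)_j`: the sum of the
multigraded Betti numbers over the multidegrees of total degree `j`. -/
noncomputable def betti (I : Ideal (PolyS K nv)) (i j : ℕ) : ℕ :=
  ∑ᶠ m ∈ {m : Fin nv → ℕ | degTot nv m = j}, multiBetti K nv I i m

/-- The maximal shift `t_i(S/I) = max { j : β_{i,j}(S/I) ≠ 0 }`, with `t_i(S/I) = 0`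
if `β_{i,j}(S/I) = 0` for all `j` (the supremum over the empty set of naturals is `0`). -/
noncomputable def tshift (I : Ideal (PolyS K nv)) (i : ℕ) : ℕ :=
  sSup {j | betti K nv I i j ≠ 0}

/-- `a_i(S/I)`: the number of multidegrees `m` with `β_{i,m}(S/I) ≠ 0`. -/
noncomputable def acount (I : Ideal (PolyS K nv)) (i : ℕ) : ℕ :=
  {m : Fin nv → ℕ | multiBetti K nv I i m ≠ 0}.ncard

end Monomial

section Labelled

variable {K} {L : Type}

lemma map_mem_of_supported {ι M : Type} [AddCommGroup M] [Module K M] {s : Set ι}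
    {N : Submodule K M} {f : (ι →₀ K) →ₗ[K] M} (hf : ∀ i ∈ s, f (single i 1) ∈ N)
    {x : ι →₀ K} (hx : x ∈ supported K K s) : f x ∈ N := by
  have : supported K K s ≤ N.comap f := by
    rw [supported_eq_span_single, Submodule.span_le]
    rintro _ ⟨i, hi, rfl⟩
    exact hf i hi
  exact this hx

/-- The tensor product of two vectors in free modules. -/
def tens {ι κ : Type} : (ι →₀ K) →ₗ[K] (κ →₀ K) →ₗ[K] (ι × κ →₀ K) :=
  (TensorProduct.mk K (ι →₀ K) (κ →₀ K)).compr₂ (finsuppTensorFinsupp' K ι κ).toLinearMap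

@[simp]
lemma tens_single_single {ι κ : Type} (i : ι) (j : κ) (a b : K) :
    tens (single i a) (single j b) = single (i, j) (a * b) := by
  simp [tens]

lemma tens_mem_supported {ι κ : Type} {P : Set (ι × κ)} {s : Set ι} {t : Set κ}
    (hst : ∀ i ∈ s, ∀ j ∈ t, (i, j) ∈ P) {u : ι →₀ K} {v : κ →₀ K}
    (hu : u ∈ supported K K s) (hv : v ∈ supported K K t) :
    tens u v ∈ supported K K P := by
  refine map_mem_of_supported (f := tens.flip v) (fun i hi => ?_) hu
  refine map_mem_of_supported (f := tens (single i 1)) (fun j hj => ?_) hv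
  simpa using single_mem_supported K (1 : K) (hst i hi j hj)

/-- The operator which applies the linear map `f j` to the first factor of
`tens u (single j 1)`. -/
def blockMap {ι ι' κ : Type} (f : κ → (ι →₀ K) →ₗ[K] (ι' →₀ K)) :
    (ι × κ →₀ K) →ₗ[K] (ι' × κ →₀ K) :=
  Finsupp.lsum K fun p => tens.flip (single p.2 1) ∘ₗ f p.2 ∘ₗ lsingle p.1

@[simp]
lemma blockMap_single {ι ι' κ : Type} (f : κ → (ι →₀ K) →ₗ[K] (ι' →₀ K)) (i : ι) (j : κ) (a : K) :
    blockMap f (single (i, j) a) = tens (f j (single i a)) (single j 1) := by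
  simp [blockMap]

lemma blockMap_tens_single {ι ι' κ : Type} (f : κ → (ι →₀ K) →ₗ[K] (ι' →₀ K))
    (u : ι →₀ K) (j : κ) :
    blockMap f (tens u (single j 1)) = tens (f j u) (single j 1) := by
  have : blockMap f ∘ₗ tens.flip (single j 1) = tens.flip (single j 1) ∘ₗ f j := by
    ext i : 2
    simp
  exact LinearMap.congr_fun this u

lemma blockMap_comp {ι ι' ι'' κ : Type} (f : κ → (ι' →₀ K) →ₗ[K] (ι'' →₀ K))
    (g : κ → (ι →₀ K) →ₗ[K] (ι' →₀ K)) (z : ι × κ →₀ K) :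
    blockMap f (blockMap g z) = blockMap (fun j => f j ∘ₗ g j) z := by
  have : blockMap f ∘ₗ blockMap g = blockMap fun j => f j ∘ₗ g j := by
    refine Finsupp.lhom_ext' fun ⟨i, j⟩ => LinearMap.ext_ring ?_
    simp [blockMap_tens_single]
  exact LinearMap.congr_fun this z

lemma blockMap_add {ι ι' κ : Type} (f g : κ → (ι →₀ K) →ₗ[K] (ι' →₀ K)) (z : ι × κ →₀ K) :
    blockMap f z + blockMap g z = blockMap (fun j => f j + g j) z := by
  have : blockMap f + blockMap g = blockMap fun j => f j + g j := by
    refine Finsupp.lhom_ext' fun ⟨i, j⟩ => LinearMap.ext_ring ?_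
    simp
  exact LinearMap.congr_fun this z

lemma blockMap_id {ι κ : Type} (z : ι × κ →₀ K) :
    blockMap (fun _ => LinearMap.id) z = z := by
  have : blockMap (fun _ : κ => (LinearMap.id : (ι →₀ K) →ₗ[K] (ι →₀ K))) = LinearMap.id := by
    refine Finsupp.lhom_ext' fun ⟨i, j⟩ => LinearMap.ext_ring ?_
    simp
  exact LinearMap.congr_fun this z

/-- The linear map `f` applied to the first factor. -/
def leftMap {ι ι' : Type} (κ : Type) (f : (ι →₀ K) →ₗ[K] (ι' →₀ K)) :
    (ι × κ →₀ K) →ₗ[K] (ι' × κ →₀ K) :=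
  blockMap fun _ => f

lemma leftMap_tens {ι ι' κ : Type} (f : (ι →₀ K) →ₗ[K] (ι' →₀ K)) (u : ι →₀ K) (v : κ →₀ K) :
    leftMap κ f (tens u v) = tens (f u) v := by
  have : leftMap κ f ∘ₗ tens u = tens (f u) := by
    ext j : 2
    simp [leftMap, blockMap_tens_single]
  exact LinearMap.congr_fun this v

/-- The exchange of the two factors. -/
def swapMap {ι κ : Type} : (ι × κ →₀ K) ≃ₗ[K] (κ × ι →₀ K) :=
  Finsupp.domLCongr (Equiv.prodComm ι κ)

@[simp]
lemma swapMap_swapMap {ι κ : Type} (z : ι × κ →₀ K) : swapMap (swapMap z) = z := by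
  ext p
  simp [swapMap]

@[simp]
lemma swapMap_single {ι κ : Type} (i : ι) (j : κ) (a : K) :
    swapMap (single (i, j) a) = single (j, i) a := by
  simp [swapMap]

lemma swapMap_mem_supported {ι κ : Type} {P : Set (ι × κ)} {z : ι × κ →₀ K}
    (hz : z ∈ supported K K P) : swapMap z ∈ supported K K (Prod.swap ⁻¹' P) :=
  map_mem_of_supported (f := swapMap.toLinearMap)
    (fun p hp => by
      rw [← Prod.mk.eta (p := p), LinearEquiv.coe_coe, swapMap_single]
      exact single_mem_supported K _ hp) hz

/-- The linear map `f` applied to the second factor. -/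
def rightMap {κ κ' : Type} (ι : Type) (f : (κ →₀ K) →ₗ[K] (κ' →₀ K)) :
    (ι × κ →₀ K) →ₗ[K] (ι × κ' →₀ K) :=
  swapMap.toLinearMap ∘ₗ leftMap ι f ∘ₗ swapMap.toLinearMap

lemma swapMap_tens {ι κ : Type} (u : ι →₀ K) (v : κ →₀ K) :
    swapMap (tens u v) = tens v u := by
  have : (tens (K := K) (ι := ι) (κ := κ)).compr₂ swapMap.toLinearMap = tens.flip := by
    ext i j : 4
    simp
  exact LinearMap.congr_fun₂ this u v

lemma rightMap_tens {ι κ κ' : Type} (f : (κ →₀ K) →ₗ[K] (κ' →₀ K)) (u : ι →₀ K) (v : κ →₀ K) :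
    rightMap ι f (tens u v) = tens u (f v) := by
  simp [rightMap, swapMap_tens, leftMap_tens]

lemma swapMap_rightMap {ι κ κ' : Type} (f : (κ →₀ K) →ₗ[K] (κ' →₀ K)) (z : ι × κ →₀ K) :
    swapMap (rightMap ι f z) = leftMap ι f (swapMap z) := by
  simp [rightMap]

lemma hom_ext_tens {ι κ M : Type} [AddCommGroup M] [Module K M] {f g : (ι × κ →₀ K) →ₗ[K] M}
    (h : ∀ u v, f (tens u v) = g (tens u v)) : f = g := by
  ext p : 2
  simpa using h (single p.1 1) (single p.2 1)

variable [SemilatticeSup L] [OrderBot L]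

variable (K L) in
/-- A complex of free modules whose basis elements are labelled by elements of `L`, such that for
every `z > ⊥` the subcomplex spanned by the basis elements with label `≤ z` is exact, and which is
generated by a single element of label `⊥` in degree zero.  It encodes a projective resolution, by
representable functors on `L`, of the simple functor concentrated at `⊥`. -/
structure LabelledResolution where
  /-- The indices of the basis elements in each degree. -/
  ι : ℕ → Type
  /-- The labels of the basis elements. -/
  label : ∀ n, ι n → L
  /-- The differential. -/
  d : ∀ n, (ι (n + 1) →₀ K) →ₗ[K] (ι n →₀ K)
  nonempty_zero : Nonempty (ι 0)
  subsingleton_zero : Subsingleton (ι 0)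
  label_zero : ∀ i, label 0 i = ⊥
  bot_lt_label : ∀ n i, ⊥ < label (n + 1) i
  d_single_mem : ∀ n i, d n (single i 1) ∈ supported K K {j | label n j ≤ label (n + 1) i}
  d_d : ∀ n x, d n (d (n + 1) x) = 0
  exact_zero : ∀ z, ⊥ < z → ∀ x ∈ supported K K {i | label 0 i ≤ z},
    ∃ y ∈ supported K K {i | label 1 i ≤ z}, d 0 y = x
  exact_succ : ∀ n z, ⊥ < z → ∀ x ∈ supported K K {i | label (n + 1) i ≤ z}, d n x = 0 →
    ∃ y ∈ supported K K {i | label (n + 2) i ≤ z}, d (n + 1) y = x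

namespace LabelledResolution

variable (X Y : LabelledResolution K L)

/-- The part of degree `n` spanned by the basis elements with label `≤ z`. -/
abbrev filLE (n : ℕ) (z : L) : Submodule K (X.ι n →₀ K) := supported K K {i | X.label n i ≤ z}

/-- The part of degree `n` spanned by the basis elements with label `< z`. -/
abbrev filLT (n : ℕ) (z : L) : Submodule K (X.ι n →₀ K) := supported K K {i | X.label n i < z}

/-- The part of degree `(p, q)` of the tensor product spanned by the pairs of basis elements whose
labels have join `≤ m`. -/
abbrev joinLE (m : L) (p q : ℕ) : Submodule K (X.ι p × Y.ι q →₀ K) :=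
  supported K K {x | X.label p x.1 ⊔ Y.label q x.2 ≤ m}

/-- The part of degree `(p, q)` of the tensor product spanned by the pairs of basis elements whose
labels have join `< m`. -/
abbrev joinLT (m : L) (p q : ℕ) : Submodule K (X.ι p × Y.ι q →₀ K) :=
  supported K K {x | X.label p x.1 ⊔ Y.label q x.2 < m}

/-- The differential of the first factor maps `z` into the part with joins `< m`. -/
def RowClosed (m : L) : ∀ p q : ℕ, (X.ι p × Y.ι q →₀ K) → Prop
  | 0, _, _ => True
  | p + 1, q, z => leftMap _ (X.d p) z ∈ joinLT X Y m p q

/-- The differential of the second factor maps `z` into the part with joins `< m`. -/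
def ColClosed (m : L) : ∀ p q : ℕ, (X.ι p × Y.ι q →₀ K) → Prop
  | _, 0, _ => True
  | p, q + 1, z => rightMap _ (Y.d q) z ∈ joinLT X Y m p q

variable {X Y}

lemma exists_contraction (x : L) (hx : ⊥ < x) :
    ∃ h : ∀ n, (X.ι n →₀ K) →ₗ[K] (X.ι (n + 1) →₀ K),
      (∀ n i, h n (single i 1) ∈ X.filLE (n + 1) (X.label n i ⊔ x)) ∧
      (∀ u, X.d 0 (h 0 u) = u) ∧
      (∀ n u, X.d (n + 1) (h (n + 1) u) + h n (X.d n u) = u) := by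
  let A : ℕ → Type := fun n =>
    {h : (X.ι n →₀ K) →ₗ[K] (X.ι (n + 1) →₀ K) //
      (∀ i, h (single i 1) ∈ X.filLE (n + 1) (X.label n i ⊔ x)) ∧
      ∀ u, X.d n (h (X.d n u)) = X.d n u}
  have key : ∀ n (g : (X.ι n →₀ K) →ₗ[K] (X.ι n →₀ K)),
      (∀ i, ∃ y ∈ X.filLE (n + 1) (X.label n i ⊔ x), X.d n y = g (single i 1)) →
      ∃ h : (X.ι n →₀ K) →ₗ[K] (X.ι (n + 1) →₀ K),
        (∀ i, h (single i 1) ∈ X.filLE (n + 1) (X.label n i ⊔ x)) ∧ ∀ u, X.d n (h u) = g u := by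
    intro n g hg
    choose y hy hdy using hg
    refine ⟨Finsupp.linearCombination K y, fun i => by simpa using hy i, fun u => ?_⟩
    have : X.d n ∘ₗ Finsupp.linearCombination K y = g := by
      ext i : 2
      simp [hdy]
    exact LinearMap.congr_fun this u
  have hpos : ∀ n i, ⊥ < X.label n i ⊔ x := fun n i => lt_of_lt_of_le hx le_sup_right
  have start : ∃ h : A 0, ∀ u, X.d 0 (h.1 u) = u := by
    obtain ⟨h, h1, h2⟩ := key 0 LinearMap.id fun i =>
      X.exact_zero _ (hpos 0 i) _ (single_mem_supported K _ (by simp))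
    exact ⟨⟨h, h1, fun u => h2 _⟩, h2⟩
  have step : ∀ n (a : A n), ∃ b : A (n + 1),
      ∀ u, X.d (n + 1) (b.1 u) + a.1 (X.d n u) = u := by
    rintro n ⟨a, ha1, ha2⟩
    obtain ⟨h, h1, h2⟩ := key (n + 1) (LinearMap.id - a ∘ₗ X.d n) fun i => by
      refine X.exact_succ n _ (hpos _ i) _ ?_ (by simp [ha2])
      simp only [LinearMap.sub_apply, LinearMap.id_apply, LinearMap.comp_apply]
      refine sub_mem (single_mem_supported K _ (by simp)) ?_
      refine map_mem_of_supported (f := a) (fun j hj => ?_) (X.d_single_mem n i)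
      exact supported_mono (fun k hk => le_trans hk (sup_le_sup_right hj x)) (ha1 j)
    refine ⟨⟨h, h1, fun u => ?_⟩, fun u => ?_⟩
    · simp [h2, X.d_d]
    · simp [h2]
  obtain ⟨h0, hh0⟩ := start
  choose next hnext using step
  let s : ∀ n, A n := fun n => Nat.rec h0 (fun n a => next n a) n
  exact ⟨fun n => (s n).1, fun n => (s n).2.1, hh0, fun n u => hnext n (s n) u⟩

lemma blockMap_mem_join {m : L} {p q r : ℕ} {f : Y.ι q → (X.ι p →₀ K) →ₗ[K] (X.ι r →₀ K)}
    (hf : ∀ i j, f j (single i 1) ∈ X.filLE r (X.label p i ⊔ Y.label q j)) :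
    (∀ z ∈ joinLE X Y m p q, blockMap f z ∈ joinLE X Y m r q) ∧
      ∀ z ∈ joinLT X Y m p q, blockMap f z ∈ joinLT X Y m r q := by
  have key : ∀ s : Set L, (∀ x y, x ≤ y → y ∈ s → x ∈ s) →
      ∀ z ∈ supported K K {x : X.ι p × Y.ι q | X.label p x.1 ⊔ Y.label q x.2 ∈ s},
        blockMap f z ∈ supported K K {x : X.ι r × Y.ι q | X.label r x.1 ⊔ Y.label q x.2 ∈ s} := by
    intro s hs z hz
    refine map_mem_of_supported (f := blockMap f) (fun x hx => ?_) hz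
    rw [← Prod.mk.eta (p := x), blockMap_single]
    refine tens_mem_supported (t := {x.2}) ?_ (hf x.1 x.2) (single_mem_supported K _ rfl)
    rintro i' hi' _ rfl
    exact hs _ _ (sup_le hi' le_sup_right) hx
  exact ⟨key (Set.Iic m) fun x y h1 h2 => le_trans h1 h2,
    key (Set.Iio m) fun x y h1 h2 => lt_of_le_of_lt h1 h2⟩

lemma leftMap_mem_joinLE {m : L} {p q : ℕ} {z} (hz : z ∈ joinLE X Y m (p + 1) q) :
    leftMap _ (X.d p) z ∈ joinLE X Y m p q :=
  (blockMap_mem_join fun i _ =>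
    supported_mono (fun _ h => le_sup_of_le_left h) (X.d_single_mem p i)).1 z hz

lemma leftMap_mem_joinLT {m : L} {p q : ℕ} {z} (hz : z ∈ joinLT X Y m (p + 1) q) :
    leftMap _ (X.d p) z ∈ joinLT X Y m p q :=
  (blockMap_mem_join fun i _ =>
    supported_mono (fun _ h => le_sup_of_le_left h) (X.d_single_mem p i)).2 z hz

lemma swapMap_mem_joinLE {m : L} {p q : ℕ} {z} (hz : z ∈ joinLE X Y m p q) :
    swapMap z ∈ joinLE Y X m q p :=
  supported_mono (s := Prod.swap ⁻¹' {x : X.ι p × Y.ι q | X.label p x.1 ⊔ Y.label q x.2 ≤ m})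
    (fun _ hx => le_of_eq_of_le (sup_comm _ _) hx) (swapMap_mem_supported hz)

lemma swapMap_mem_joinLT {m : L} {p q : ℕ} {z} (hz : z ∈ joinLT X Y m p q) :
    swapMap z ∈ joinLT Y X m q p :=
  supported_mono (s := Prod.swap ⁻¹' {x : X.ι p × Y.ι q | X.label p x.1 ⊔ Y.label q x.2 < m})
    (fun _ hx => lt_of_eq_of_lt (sup_comm _ _) hx) (swapMap_mem_supported hz)

lemma rightMap_mem_joinLE {m : L} {p q : ℕ} {z} (hz : z ∈ joinLE X Y m p (q + 1)) :
    rightMap _ (Y.d q) z ∈ joinLE X Y m p q :=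
  swapMap_mem_joinLE (leftMap_mem_joinLE (swapMap_mem_joinLE hz))

lemma rightMap_mem_joinLT {m : L} {p q : ℕ} {z} (hz : z ∈ joinLT X Y m p (q + 1)) :
    rightMap _ (Y.d q) z ∈ joinLT X Y m p q :=
  swapMap_mem_joinLT (leftMap_mem_joinLT (swapMap_mem_joinLT hz))

lemma leftMap_rightMap {ι ι' κ κ' : Type} (f : (ι →₀ K) →ₗ[K] (ι' →₀ K))
    (g : (κ →₀ K) →ₗ[K] (κ' →₀ K)) (z : ι × κ →₀ K) :
    leftMap _ f (rightMap _ g z) = rightMap _ g (leftMap _ f z) := by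
  have : leftMap _ f ∘ₗ rightMap _ g = rightMap _ g ∘ₗ leftMap _ f :=
    hom_ext_tens fun u v => by simp [leftMap_tens, rightMap_tens]
  exact LinearMap.congr_fun this z

lemma leftMap_d_d {κ : Type} {p : ℕ} (z : X.ι (p + 2) × κ →₀ K) :
    leftMap _ (X.d p) (leftMap _ (X.d (p + 1)) z) = 0 := by
  have : leftMap κ (X.d p) ∘ₗ leftMap κ (X.d (p + 1)) = 0 :=
    hom_ext_tens fun u v => by simp [leftMap_tens, X.d_d]
  exact LinearMap.congr_fun this z

lemma rightMap_d_d {ι : Type} {q : ℕ} (z : ι × Y.ι (q + 2) →₀ K) :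
    rightMap _ (Y.d q) (rightMap _ (Y.d (q + 1)) z) = 0 := by
  simp [rightMap, leftMap_d_d]

/-- The rows `q > 0` of the tensor product are exact modulo the pairs with join `< m`. -/
lemma row_exact {m : L} {p q : ℕ} (hq : ∀ j, ⊥ < Y.label q j) {z} (hz : z ∈ joinLE X Y m p q)
    (hc : RowClosed X Y m p q z) :
    ∃ w ∈ joinLE X Y m (p + 1) q, z - leftMap _ (X.d p) w ∈ joinLT X Y m p q := by
  choose h hmem hzero hsucc using fun j => exists_contraction (X := X) (Y.label q j) (hq j)
  refine ⟨blockMap (fun j => h j p) z,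
    (blockMap_mem_join fun i j => hmem j p i).1 z hz, ?_⟩
  match p, z, hc with
  | 0, z, _ =>
    have : (fun j => X.d 0 ∘ₗ h j 0) = fun _ => LinearMap.id :=
      funext fun j => LinearMap.ext (hzero j)
    rw [leftMap, blockMap_comp, this, blockMap_id, sub_self]
    exact zero_mem _
  | p + 1, z, hc =>
    have : (fun j => X.d (p + 1) ∘ₗ h j (p + 1) + h j p ∘ₗ X.d p) = fun _ => LinearMap.id :=
      funext fun j => LinearMap.ext (hsucc j p)
    have h2 : z - leftMap _ (X.d (p + 1)) (blockMap (fun j => h j (p + 1)) z) =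
        blockMap (fun j => h j p) (leftMap _ (X.d p) z) := by
      rw [sub_eq_iff_eq_add', leftMap, leftMap, blockMap_comp, blockMap_comp, blockMap_add, this,
        blockMap_id]
    rw [h2]
    exact (blockMap_mem_join fun i j => hmem j p i).2 _ hc

/-- The columns `p > 0` of the tensor product are exact modulo the pairs with join `< m`. -/
lemma col_exact {m : L} {p q : ℕ} (hp : ∀ i, ⊥ < X.label p i) {z} (hz : z ∈ joinLE X Y m p q)
    (hc : ColClosed X Y m p q z) :
    ∃ w ∈ joinLE X Y m p (q + 1), z - rightMap _ (Y.d q) w ∈ joinLT X Y m p q := by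
  have hc' : RowClosed Y X m q p (swapMap z) := by
    match q, z, hc with
    | 0, z, _ => trivial
    | q + 1, z, hc =>
      rw [RowClosed, ← swapMap_rightMap]
      exact swapMap_mem_joinLT hc
  obtain ⟨w, hw, hzw⟩ := row_exact hp (swapMap_mem_joinLE hz) hc'
  refine ⟨swapMap w, swapMap_mem_joinLE hw, ?_⟩
  simpa [rightMap] using swapMap_mem_joinLT hzw

variable (X Y) in
/-- Every element of degree `(p, q)` closed for both differentials is, modulo the pairs with join
`< m`, the image under the second differential of an element closed for the first one. -/
def BiclosedLift (m : L) (p q : ℕ) : Prop :=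
  ∀ z ∈ joinLE X Y m p q, RowClosed X Y m p q z → ColClosed X Y m p q z →
    ∃ t ∈ joinLE X Y m p (q + 1), RowClosed X Y m p (q + 1) t ∧
      z - rightMap _ (Y.d q) t ∈ joinLT X Y m p q

lemma rowClosed_leftMap {m : L} {p q : ℕ} (u : X.ι (p + 1) × Y.ι q →₀ K) :
    RowClosed X Y m p q (leftMap _ (X.d p) u) := by
  match p, u with
  | 0, u => trivial
  | p + 1, u => rw [RowClosed, leftMap_d_d]; exact zero_mem _

lemma colClosed_rightMap {m : L} {p q : ℕ} (u : X.ι p × Y.ι (q + 1) →₀ K) :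
    ColClosed X Y m p q (rightMap _ (Y.d q) u) := by
  match q, u with
  | 0, u => trivial
  | q + 1, u => rw [ColClosed, rightMap_d_d]; exact zero_mem _

lemma BiclosedLift.zigzag {m : L} {p q : ℕ} (h : BiclosedLift X Y m (p + 1) q) :
    BiclosedLift X Y m p (q + 1) := by
  intro z hz hr hc
  obtain ⟨w, hw, hzw⟩ := row_exact (Y.bot_lt_label q) hz hr
  have hrow : leftMap _ (X.d p) (rightMap _ (Y.d q) w) ∈ joinLT X Y m p q := by
    rw [leftMap_rightMap]
    have := sub_mem (show rightMap _ (Y.d q) z ∈ joinLT X Y m p q from hc)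
      (rightMap_mem_joinLT hzw)
    simpa using this
  obtain ⟨s, hs, hsr, hws⟩ := h _ (rightMap_mem_joinLE hw) hrow (colClosed_rightMap w)
  obtain ⟨u, hu, hwu⟩ := col_exact (X.bot_lt_label p) (sub_mem hw hs)
    (show ColClosed X Y m (p + 1) (q + 1) (w - s) by rw [ColClosed, map_sub]; exact hws)
  refine ⟨leftMap _ (X.d p) u, leftMap_mem_joinLE hu, rowClosed_leftMap u, ?_⟩
  have h1 := leftMap_mem_joinLT hwu
  have h2 : leftMap _ (X.d p) s ∈ joinLT X Y m p (q + 1) := hsr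
  rw [map_sub, map_sub, leftMap_rightMap] at h1
  convert add_mem (add_mem hzw h1) h2 using 1
  abel

lemma BiclosedLift.zero_left {m : L} {p q : ℕ} (h : BiclosedLift X Y m p q) :
    BiclosedLift X Y m 0 (p + q) := by
  induction p generalizing q with
  | zero => simpa using h
  | succ p ih => rw [show p + 1 + q = p + (q + 1) by ring]; exact ih h.zigzag

variable (X) in
/-- The differential maps `z` into the part with labels `< m`. -/
def ClosedAt (m : L) : ∀ n : ℕ, (X.ι n →₀ K) → Prop
  | 0, _ => True
  | n + 1, z => X.d n z ∈ X.filLT n m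

variable (X) in
/-- The part of label `m` of the complex has no homology in degree `n`. -/
def AcyclicAt (m : L) (n : ℕ) : Prop :=
  ∀ z ∈ X.filLE n m, X.ClosedAt m n z → ∃ t ∈ X.filLE (n + 1) m, z - X.d n t ∈ X.filLT n m

lemma BiclosedLift.acyclicAt {m : L} {n : ℕ} (h : BiclosedLift X Y m 0 n) : Y.AcyclicAt m n := by
  intro z hz hc
  obtain ⟨i⟩ := X.nonempty_zero
  have hi := X.label_zero i
  let φ : ∀ n, (X.ι 0 × Y.ι n →₀ K) →ₗ[K] (Y.ι n →₀ K) := fun n => lmapDomain K K Prod.snd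
  have hφtens : ∀ n u v, φ n (tens u v) = linearCombination K (fun _ => (1 : K)) u • v := by
    intro n u v
    have : tens.compr₂ (φ n) =
        LinearMap.lsmul K (Y.ι n →₀ K) ∘ₗ linearCombination K fun _ => (1 : K) := by
      ext i j : 4
      simp [φ]
    exact LinearMap.congr_fun₂ this u v
  have hφe : ∀ n x, φ n (tens (single i 1) x) = x := fun n x => by simp [hφtens]
  have hφd : ∀ n x, φ n (rightMap _ (Y.d n) x) = Y.d n (φ (n + 1) x) := fun n x => by
    have : φ n ∘ₗ rightMap _ (Y.d n) = Y.d n ∘ₗ φ (n + 1) :=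
      hom_ext_tens fun u v => by simp [rightMap_tens, hφtens]
    exact LinearMap.congr_fun this x
  have hφLE : ∀ n x, x ∈ joinLE X Y m 0 n → φ n x ∈ Y.filLE n m := fun n x hx =>
    map_mem_of_supported (f := φ n) (N := Y.filLE n m) (fun x hx => by
      simpa [φ] using single_mem_supported (s := {j | Y.label n j ≤ m}) K (1 : K)
        (le_sup_right.trans hx)) hx
  have hφLT : ∀ n x, x ∈ joinLT X Y m 0 n → φ n x ∈ Y.filLT n m := fun n x hx =>
    map_mem_of_supported (f := φ n) (N := Y.filLT n m) (fun x hx => by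
      simpa [φ] using single_mem_supported (s := {j | Y.label n j < m}) K (1 : K)
        (lt_of_le_of_lt le_sup_right hx)) hx
  have hcol : ColClosed X Y m 0 n (tens (single i 1) z) := by
    match n, z, hc with
    | 0, z, _ => trivial
    | n + 1, z, hc =>
      rw [ColClosed, rightMap_tens]
      exact tens_mem_supported (s := {i}) (by
        rintro _ rfl j hj; simpa [hi] using hj) (single_mem_supported K _ rfl) hc
  obtain ⟨t, ht, -, hzt⟩ := h (tens (single i 1) z) (tens_mem_supported (s := {i}) (by
      rintro _ rfl j hj; simpa [hi] using hj) (single_mem_supported K _ rfl) hz)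
    trivial hcol
  refine ⟨φ _ t, hφLE _ _ ht, ?_⟩
  have := hφLT _ _ hzt
  rwa [map_sub, hφe, hφd] at this

lemma AcyclicAt.biclosedLift {m : L} {n : ℕ} (h : X.AcyclicAt m n) :
    BiclosedLift X Y m n 0 := by
  intro z hz hr _
  obtain ⟨j⟩ := Y.nonempty_zero
  have hj := Y.label_zero j
  have := Y.subsingleton_zero
  let φ : ∀ n, (X.ι n × Y.ι 0 →₀ K) →ₗ[K] (X.ι n →₀ K) := fun n => lmapDomain K K Prod.fst
  have htens : ∀ n z, tens (φ n z) (single j 1) = z := by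
    intro n z
    have : tens.flip (single j 1) ∘ₗ φ n = LinearMap.id := by
      ext x : 2
      simp [φ, ← Subsingleton.elim x.2 j]
    exact LinearMap.congr_fun this z
  have hφd : ∀ n x, φ n (leftMap _ (X.d n) x) = X.d n (φ (n + 1) x) := fun n x => by
    rw [← htens (n + 1) x, leftMap_tens]
    have hφ : ∀ n u, φ n (tens u (single j 1)) = u := by
      intro n u
      have : φ n ∘ₗ tens.flip (single j 1) = LinearMap.id := by
        ext i : 2
        simp [φ]
      exact LinearMap.congr_fun this u
    rw [hφ, hφ]
  have hφLE : ∀ n x, x ∈ joinLE X Y m n 0 → φ n x ∈ X.filLE n m := fun n x hx =>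
    map_mem_of_supported (f := φ n) (N := X.filLE n m) (fun x hx => by
      simpa [φ] using single_mem_supported (s := {i | X.label n i ≤ m}) K (1 : K)
        (le_sup_left.trans hx)) hx
  have hφLT : ∀ n x, x ∈ joinLT X Y m n 0 → φ n x ∈ X.filLT n m := fun n x hx =>
    map_mem_of_supported (f := φ n) (N := X.filLT n m) (fun x hx => by
      simpa [φ] using single_mem_supported (s := {i | X.label n i < m}) K (1 : K)
        (lt_of_le_of_lt le_sup_left hx)) hx
  have hxc : X.ClosedAt m n (φ n z) := by
    match n, z, hr with
    | 0, z, _ => trivial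
    | n + 1, z, hr =>
      rw [ClosedAt, ← hφd]
      exact hφLT _ _ hr
  obtain ⟨s, hs, hxs⟩ := h _ (hφLE _ _ hz) hxc
  obtain ⟨u, hu, hsu⟩ := col_exact (X := X) (Y := Y) (m := m) (z := tens s (single j 1))
    (X.bot_lt_label n) (tens_mem_supported (t := {j}) (by
      rintro i hi _ rfl; simpa [hj] using hi) hs (single_mem_supported K _ rfl)) trivial
  refine ⟨leftMap _ (X.d n) u, leftMap_mem_joinLE hu, rowClosed_leftMap u, ?_⟩
  have h1 := leftMap_mem_joinLT hsu
  have h2 : tens (φ n z - X.d n s) (single j 1) ∈ joinLT X Y m n 0 :=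
    tens_mem_supported (t := {j}) (by
      rintro i hi _ rfl; simpa [hj] using hi) hxs (single_mem_supported K _ rfl)
  rw [map_sub, leftMap_rightMap, leftMap_tens] at h1
  rw [map_sub, LinearMap.sub_apply, htens] at h2
  convert add_mem h1 h2 using 1
  abel

lemma biclosedLift_of_forall_ne {m : L} {p q : ℕ}
    (h : ∀ i j, X.label p i ⊔ Y.label q j ≠ m) : BiclosedLift X Y m p q := by
  intro z hz _ _
  refine ⟨0, zero_mem _, ?_, ?_⟩
  · match p with
    | 0 => trivial
    | p + 1 => rw [RowClosed, map_zero]; exact zero_mem _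
  · rw [map_zero, sub_zero]
    exact supported_mono (fun x hx => lt_of_le_of_ne hx (h x.1 x.2)) hz

end LabelledResolution

end Labelled

section Minimal

open LabelledResolution

variable {K} {L : Type} [SemilatticeSup L] [OrderBot L]

lemma exists_relative_compl {M : Type} [AddCommGroup M] [Module K M] {R Z : Submodule K M}
    (h : R ≤ Z) : ∃ C, R ⊓ C = ⊥ ∧ R ⊔ C = Z := by
  obtain ⟨D, hD⟩ := exists_isCompl R
  refine ⟨D ⊓ Z, ?_, ?_⟩
  · rw [← inf_assoc, hD.inf_eq_bot, bot_inf_eq]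
  · rw [← sup_inf_assoc_of_le D h, hD.sup_eq_top, top_inf_eq]

variable (K L) in
/-- One stage of the construction of a minimal resolution: a labelled basis together with the
submodule of cycles of the module it spans. -/
structure ResolutionStage where
  /-- The indices of the basis elements. -/
  ι : Type
  /-- The labels of the basis elements. -/
  label : ι → L
  /-- The cycles. -/
  cyc : Submodule K (ι →₀ K)

namespace ResolutionStage

variable (s : ResolutionStage K L)

/-- The cycles supported on the labels `≤ z`. -/
def cycLE (z : L) : Submodule K (s.ι →₀ K) := supported K K {i | s.label i ≤ z} ⊓ s.cyc

/-- The cycles generated by those supported strictly below `z`. -/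
def cycLT (z : L) : Submodule K (s.ι →₀ K) := ⨆ y, ⨆ _ : ⊥ < y ∧ y < z, s.cycLE y

lemma cycLE_le_cycLT {y z : L} (hy : ⊥ < y) (hyz : y < z) : s.cycLE y ≤ s.cycLT z :=
  le_iSup₂_of_le y ⟨hy, hyz⟩ le_rfl

lemma cycLT_le_cycLE (z : L) : s.cycLT z ≤ s.cycLE z :=
  iSup₂_le fun _ hy => inf_le_inf_right _ (supported_mono fun _ hi => le_trans hi hy.2.le)

/-- A space of minimal generators in label `z`. -/
def newGens (z : L) : Submodule K (s.ι →₀ K) := (exists_relative_compl (s.cycLT_le_cycLE z)).choose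

lemma cycLT_inf_newGens (z : L) : s.cycLT z ⊓ s.newGens z = ⊥ :=
  (exists_relative_compl (s.cycLT_le_cycLE z)).choose_spec.1

lemma cycLT_sup_newGens (z : L) : s.cycLT z ⊔ s.newGens z = s.cycLE z :=
  (exists_relative_compl (s.cycLT_le_cycLE z)).choose_spec.2

lemma newGens_le (z : L) : s.newGens z ≤ s.cycLE z :=
  le_sup_right.trans_eq (s.cycLT_sup_newGens z)

/-- The minimal generators in label `z`. -/
abbrev Gen (z : L) : Type := Module.Basis.ofVectorSpaceIndex K (s.newGens z)

/-- The labelled set of all the minimal generators. -/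
abbrev NextIdx : Type := Σ z : {z : L // ⊥ < z}, s.Gen z.1

/-- The map sending each minimal generator to the corresponding cycle. -/
def bd : (s.NextIdx →₀ K) →ₗ[K] (s.ι →₀ K) :=
  Finsupp.linearCombination K fun b => (Module.Basis.ofVectorSpace K (s.newGens b.1.1) b.2).1

/-- The next stage. -/
def next : ResolutionStage K L where
  ι := s.NextIdx
  label b := b.1.1
  cyc := LinearMap.ker s.bd

/-- The inclusion of the span of the minimal generators in label `z`. -/
def incl (z : {z : L // ⊥ < z}) : (s.Gen z.1 →₀ K) →ₗ[K] (s.NextIdx →₀ K) :=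
  lmapDomain K K fun b => ⟨z, b⟩

lemma incl_single (z : {z : L // ⊥ < z}) (b : s.Gen z.1) :
    s.incl z (single b 1) = single ⟨z, b⟩ 1 := by
  simp [incl]

lemma incl_mem (z : {z : L // ⊥ < z}) (t : s.Gen z.1 →₀ K) :
    s.incl z t ∈ supported K K {b : s.NextIdx | b.1.1 ≤ z.1} := by
  refine map_mem_of_supported (s := Set.univ) (f := s.incl z) (fun b _ => ?_) (by simp)
  rw [incl_single]
  exact single_mem_supported K _ (le_refl z.1)

lemma bd_incl (z : {z : L // ⊥ < z}) (t : s.Gen z.1 →₀ K) :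
    s.bd (s.incl z t) = ((Module.Basis.ofVectorSpace K (s.newGens z.1)).repr.symm t).1 := by
  have : s.bd ∘ₗ s.incl z = (s.newGens z.1).subtype ∘ₗ
      (Module.Basis.ofVectorSpace K (s.newGens z.1)).repr.symm.toLinearMap := by
    ext b : 2
    simp [bd, incl]
  exact LinearMap.congr_fun this t

lemma bd_single_mem (b : s.NextIdx) : s.bd (single b 1) ∈ s.newGens b.1.1 := by
  simp [bd]

lemma cycLE_le_map_bd [WellFoundedLT L] (z : L) (hz : ⊥ < z) :
    s.cycLE z ≤ (supported K K {b : s.NextIdx | b.1.1 ≤ z}).map s.bd := by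
  induction z using WellFoundedLT.induction with
  | ind z ih =>
    rw [← cycLT_sup_newGens]
    refine sup_le (iSup₂_le fun y hy => (ih y hy.2 hy.1).trans
      (Submodule.map_mono (supported_mono fun b hb => le_trans hb hy.2.le))) fun x hx => ?_
    exact ⟨_, s.incl_mem ⟨z, hz⟩ ((Module.Basis.ofVectorSpace K (s.newGens z)).repr ⟨x, hx⟩),
      (s.bd_incl ⟨z, hz⟩ _).trans (by simp)⟩

lemma mem_supported_lt_of_bd_eq_zero {z : L} (hz : ⊥ < z) {u : s.NextIdx →₀ K}
    (hu : u ∈ supported K K {b : s.NextIdx | b.1.1 ≤ z}) (hd : s.bd u = 0) :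
    u ∈ supported K K {b : s.NextIdx | b.1.1 < z} := by
  have split : u ∈ supported K K {b : s.NextIdx | b.1.1 < z} ⊔
      LinearMap.range (s.incl ⟨z, hz⟩) := by
    refine map_mem_of_supported (f := LinearMap.id) ?_ hu
    rintro ⟨⟨y, hy⟩, b⟩ (hyz : y ≤ z)
    obtain hlt | rfl := hyz.lt_or_eq
    · exact Submodule.mem_sup_left (single_mem_supported K _ hlt)
    · exact Submodule.mem_sup_right ⟨single b 1, s.incl_single _ b⟩
  obtain ⟨r, hr, _, ⟨t, rfl⟩, rfl⟩ := Submodule.mem_sup.1 split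
  have hr' : s.bd r ∈ s.cycLT z := map_mem_of_supported (fun b hb =>
    s.cycLE_le_cycLT b.1.2 hb (s.newGens_le _ (s.bd_single_mem b))) hr
  rw [map_add, bd_incl] at hd
  have ht : ((Module.Basis.ofVectorSpace K (s.newGens z)).repr.symm t).1 ∈
      s.cycLT z ⊓ s.newGens z :=
    ⟨by rw [← neg_eq_of_add_eq_zero_right hd]; exact neg_mem hr', Subtype.prop _⟩
  rw [cycLT_inf_newGens, Submodule.mem_bot, ZeroMemClass.coe_eq_zero,
    LinearEquiv.map_eq_zero_iff] at ht
  simpa [ht] using hr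

variable (K L) in
/-- The stages of the minimal resolution. -/
def stage : ℕ → ResolutionStage K L
  | 0 => ⟨Unit, fun _ => ⊥, ⊤⟩
  | n + 1 => (stage n).next

end ResolutionStage

namespace LabelledResolution

/-- The differential strictly decreases labels. -/
def IsMinimal (X : LabelledResolution K L) : Prop :=
  ∀ n i, X.d n (single i 1) ∈ X.filLT n (X.label (n + 1) i)

open ResolutionStage in
variable (K L) in
theorem exists_isMinimal [WellFoundedLT L] : ∃ X : LabelledResolution K L, X.IsMinimal := by
  have hgen : ∀ n (i : (stage K L (n + 1)).ι),
      (stage K L n).bd (single i 1) ∈ (stage K L n).cycLE ((stage K L (n + 1)).label i) :=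
    fun n i => newGens_le _ _ (bd_single_mem _ i)
  let X : LabelledResolution K L :=
    { ι := fun n => (stage K L n).ι
      label := fun n => (stage K L n).label
      d := fun n => (stage K L n).bd
      nonempty_zero := ⟨()⟩
      subsingleton_zero := inferInstanceAs (Subsingleton Unit)
      label_zero := fun _ => rfl
      bot_lt_label := fun _ i => i.1.2
      d_single_mem := fun n i => (hgen n i).1
      d_d := fun n x => by
        have : (stage K L n).bd ∘ₗ (stage K L (n + 1)).bd = 0 := by
          ext i : 2
          exact (hgen (n + 1) i).2
        exact LinearMap.congr_fun this x
      exact_zero := fun z hz x hx => cycLE_le_map_bd (stage K L 0) z hz ⟨hx, trivial⟩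
      exact_succ := fun n z hz x hx hd =>
        cycLE_le_map_bd (stage K L (n + 1)) z hz ⟨hx, hd⟩ }
  refine ⟨X, fun n i => ?_⟩
  match n with
  | 0 => exact supported_mono (fun _ _ => i.1.2) (hgen 0 i).1
  | n + 1 =>
    exact (stage K L n).mem_supported_lt_of_bd_eq_zero i.1.2 (hgen (n + 1) i).1
      (hgen (n + 1) i).2

lemma IsMinimal.label_ne {X : LabelledResolution K L} (hX : X.IsMinimal) {m : L} {n : ℕ}
    (h : X.AcyclicAt m n) (i : X.ι n) : X.label n i ≠ m := by
  rintro rfl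
  have hc : X.ClosedAt (X.label n i) n (single i 1) := by
    match n, i with
    | 0, _ => trivial
    | n + 1, i => exact hX n i
  obtain ⟨t, ht, hit⟩ := h _ (single_mem_supported K _ (le_refl (X.label n i))) hc
  have hdt : X.d n t ∈ X.filLT n (X.label n i) :=
    map_mem_of_supported (s := {j | X.label (n + 1) j ≤ X.label n i}) (fun j hj =>
      supported_mono (fun _ hk => lt_of_lt_of_le hk hj) (hX n j)) ht
  have := add_mem hit hdt
  rw [sub_add_cancel, mem_supported, support_single _ one_ne_zero] at this
  simp at this

end LabelledResolution

end Minimal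

section Cone

variable {K}

lemma eqOn_of_supported {ι M : Type} [AddCommGroup M] [Module K M] {s : Set ι}
    {f g : (ι →₀ K) →ₗ[K] M} (h : ∀ i ∈ s, f (single i 1) = g (single i 1))
    {x : ι →₀ K} (hx : x ∈ supported K K s) : f x = g x :=
  sub_eq_zero.1 <| (Submodule.mem_bot K).1 <|
    map_mem_of_supported (f := f - g) (N := ⊥) (fun i hi => by simp [h i hi]) hx

variable {P : Type} [PartialOrder P]

/-- The set of chains lying strictly below `z`. -/
def below (z : P) (n : ℕ) : Set (OChain P n) := {c | ∀ i, c.1 i < z}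

/-- The chain obtained by adding a new top element `z`. -/
def consChain {n : ℕ} (z : P) (c : OChain P n) (h : c ∈ below z n) : OChain P (n + 1) :=
  ⟨Fin.cons z c.1, by
    intro i j hij
    cases j using Fin.cases with
    | zero => exact absurd hij (Fin.not_lt_zero i)
    | succ j =>
      cases i using Fin.cases with
      | zero => exact h j
      | succ i => exact c.2 (Fin.succ_lt_succ_iff.1 hij)⟩

lemma consChain_injective {n : ℕ} {z : P} {c c' : OChain P n} {h : c ∈ below z n}
    {h' : c' ∈ below z n} (e : consChain z c h = consChain z c' h') : c = c' :=
  Subtype.ext (Fin.cons_right_injective (α := fun _ => P) z (congrArg Subtype.val e))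

lemma exists_eq_consChain {n : ℕ} {z : P} {c : OChain P (n + 1)} (hz : c.1 0 = z) :
    ∃ c' h, c = consChain z c' h := by
  subst hz
  exact ⟨odel P 0 c, fun i => c.2 (Fin.succ_pos i), Subtype.ext (Fin.cons_self_tail c.1).symm⟩

lemma odel_zero_consChain {n : ℕ} {z : P} (c : OChain P n) (h : c ∈ below z n) :
    odel P 0 (consChain z c h) = c :=
  Subtype.ext (funext fun i => by simp [odel, consChain])

lemma odel_mem_below {n : ℕ} {z : P} {c : OChain P (n + 1)} (h : c ∈ below z (n + 1))
    (k : Fin (n + 1)) : odel P k c ∈ below z n :=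
  fun _ => h _

lemma odel_succ_consChain {n : ℕ} {z : P} (c : OChain P (n + 1)) (h : c ∈ below z (n + 1))
    (k : Fin (n + 1)) :
    odel P k.succ (consChain z c h) = consChain z (odel P k c) (odel_mem_below h k) :=
  Subtype.ext (funext fun i => by cases i using Fin.cases <;> simp [odel, consChain, Fin.removeNth])

lemma cbdry_single {n : ℕ} (c : OChain P (n + 1)) :
    cbdry K P n (single c 1) = ∑ k : Fin (n + 1), (-1 : K) ^ (k : ℕ) • single (odel P k c) 1 := by
  simp [cbdry]

lemma cbdry_mem_below {n : ℕ} {z : P} {u : CGrp K P (n + 1)}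
    (hu : u ∈ supported K K (below z (n + 1))) : cbdry K P n u ∈ supported K K (below z n) := by
  refine map_mem_of_supported (fun c hc => ?_) hu
  rw [cbdry_single]
  exact sum_mem fun k _ => Submodule.smul_mem _ _
    (single_mem_supported K _ (odel_mem_below hc k))

open Classical in
/-- The cone operator adding a new top element `z` to the chains strictly below `z`. -/
def cone (z : P) (n : ℕ) : CGrp K P n →ₗ[K] CGrp K P (n + 1) :=
  linearCombination K fun c => if h : c ∈ below z n then single (consChain z c h) 1 else 0

lemma cone_single {n : ℕ} {z : P} {c : OChain P n} (h : c ∈ below z n) :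
    cone z n (single c (1 : K)) = single (consChain z c h) 1 := by
  simp [cone, h]

lemma cone_consChain {n : ℕ} {z : P} {c : OChain P n} (h : c ∈ below z n) :
    cone z (n + 1) (single (consChain z c h) (1 : K)) = 0 := by
  have : consChain z c h ∉ below z (n + 1) := fun h' => lt_irrefl z (h' 0)
  simp [cone, this]

lemma cone_cone {n : ℕ} {z : P} (u : CGrp K P n) : cone z (n + 1) (cone z n u) = 0 := by
  have : cone z (n + 1) ∘ₗ cone z n = (0 : CGrp K P n →ₗ[K] _) := by
    ext c : 2
    by_cases h : c ∈ below z n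
    · simp [cone_single h, cone_consChain]
    · simp [cone, h]
  exact LinearMap.congr_fun this u

lemma cone_apply_consChain {n : ℕ} {z : P} (u : CGrp K P n) {c : OChain P n}
    (h : c ∈ below z n) : cone z n u (consChain z c h) = u c := by
  classical
  have : lapply (consChain z c h) ∘ₗ cone z n = (lapply c : CGrp K P n →ₗ[K] K) := by
    ext c' : 2
    by_cases h' : c' ∈ below z n
    · have : consChain z c' h' = consChain z c h ↔ c' = c :=
        ⟨consChain_injective, by rintro rfl; rfl⟩
      simp [cone_single h', single_apply, this]
    · have : c' ≠ c := by rintro rfl; exact h' h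
      simp [cone, h', this]
  exact LinearMap.congr_fun this u

lemma eq_zero_of_cone_mem_below {n : ℕ} {z : P} {u : CGrp K P n}
    (hu : u ∈ supported K K (below z n))
    (hc : cone z n u ∈ supported K K (below z (n + 1))) : u = 0 := by
  ext c
  by_cases h : c ∈ below z n
  · rw [← cone_apply_consChain u h]
    refine (mem_supported' K _).1 hc _ fun h' => lt_irrefl z (h' 0)
  · exact (mem_supported' K _).1 hu _ h

lemma cbdry_zero_cone {z : P} (u : CGrp K P 0) : cbdry K P 0 (cone z 0 u) = u := by
  have : cbdry K P 0 ∘ₗ cone z 0 = LinearMap.id := by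
    ext c : 2
    have h : c ∈ below z 0 := fun i => i.elim0
    simp [cone_single h, cbdry_single, odel_zero_consChain]
  exact LinearMap.congr_fun this u

lemma cbdry_succ_consChain {n : ℕ} {z : P} {c : OChain P (n + 1)} (h : c ∈ below z (n + 1)) :
    cbdry K P (n + 1) (single (consChain z c h) 1) =
      single c 1 - cone z n (cbdry K P n (single c 1)) := by
  rw [cbdry_single, Fin.sum_univ_succ, cbdry_single, map_sum, sub_eq_add_neg,
    ← Finset.sum_neg_distrib]
  congr 1
  · simp [odel_zero_consChain]
  · refine Finset.sum_congr rfl fun k _ => ?_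
    rw [odel_succ_consChain, map_smul, cone_single (odel_mem_below h k), Fin.val_succ, pow_succ,
      mul_neg_one, neg_smul]

lemma cbdry_succ_cone {n : ℕ} {z : P} {u : CGrp K P (n + 1)}
    (hu : u ∈ supported K K (below z (n + 1))) :
    cbdry K P (n + 1) (cone z (n + 1) u) = u - cone z n (cbdry K P n u) := by
  refine eqOn_of_supported (f := cbdry K P (n + 1) ∘ₗ cone z (n + 1))
    (g := LinearMap.id - cone z n ∘ₗ cbdry K P n) (fun c hc => ?_) hu
  simp [cone_single hc, cbdry_succ_consChain]

lemma cbdry_cbdry (n : ℕ) (u : CGrp K P (n + 2)) : cbdry K P n (cbdry K P (n + 1) u) = 0 := by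
  suffices h : cbdry K P n ∘ₗ cbdry K P (n + 1) = 0 from LinearMap.congr_fun h u
  clear u
  induction n with
  | zero =>
    ext c : 2
    obtain ⟨z, c', h, rfl⟩ : ∃ z c' h, c = consChain z c' h := ⟨_, exists_eq_consChain rfl⟩
    simp [cbdry_succ_consChain, cbdry_zero_cone]
  | succ n ih =>
    ext c : 2
    obtain ⟨z, c', h, rfl⟩ : ∃ z c' h, c = consChain z c' h := ⟨_, exists_eq_consChain rfl⟩
    have hz : cbdry K P n (cbdry K P (n + 1) (single c' 1)) = 0 := LinearMap.congr_fun ih _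
    simp [cbdry_succ_consChain, hz,
      cbdry_succ_cone (cbdry_mem_below (single_mem_supported K (1 : K) h))]

lemma cone_cbdry_consChain {n : ℕ} {z : P} {c : OChain P n} (h : c ∈ below z n) :
    cone z n (cbdry K P n (single (consChain z c h) 1)) = single (consChain z c h) 1 := by
  match n with
  | 0 => simp [cbdry_single, odel_zero_consChain, cone_single h]
  | n + 1 => simp [cbdry_succ_consChain, cone_cone, cone_single h]

lemma mem_below_or_exists_eq_consChain {n : ℕ} {z : P} {c : OChain P (n + 1)} (h : c.1 0 ≤ z) :
    c ∈ below z (n + 1) ∨ ∃ c' h, c = consChain z c' h :=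
  h.lt_or_eq.imp (fun hlt i => (c.2.antitone (Fin.zero_le i)).trans_lt hlt) exists_eq_consChain

lemma cbdry_cone_add_cone_cbdry {n : ℕ} {z : P} {u : CGrp K P (n + 1)}
    (hu : u ∈ supported K K {c : OChain P (n + 1) | c.1 0 ≤ z}) :
    cbdry K P (n + 1) (cone z (n + 1) u) + cone z n (cbdry K P n u) = u := by
  refine eqOn_of_supported (f := cbdry K P (n + 1) ∘ₗ cone z (n + 1) + cone z n ∘ₗ cbdry K P n)
    (g := LinearMap.id) (fun c hc => ?_) hu
  obtain hb | ⟨c', h, rfl⟩ := mem_below_or_exists_eq_consChain hc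
  · simp [cbdry_succ_cone (single_mem_supported K (1 : K) hb)]
  · simp [cone_consChain, cone_cbdry_consChain]

lemma cone_mem {n : ℕ} {z : P} (u : CGrp K P n) :
    cone z n u ∈ supported K K {c : OChain P (n + 1) | c.1 0 ≤ z} := by
  refine map_mem_of_supported (s := Set.univ) (f := (cone z n : CGrp K P n →ₗ[K] _))
    (fun c _ => ?_) (by simp)
  by_cases h : c ∈ below z n
  · rw [cone_single h]
    exact single_mem_supported K _ (le_refl z)
  · simp [cone, h]

/-- The image of a chain under an order embedding. -/
def mapChain {Q : Type} [PartialOrder Q] (j : Q ↪o P) {n : ℕ} (c : OChain Q n) : OChain P n :=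
  ⟨j ∘ c.1, j.strictMono.comp_strictAnti c.2⟩

variable {Q : Type} [PartialOrder Q] {j : Q ↪o P} {m : P}

/-- The map induced on chain groups by an order embedding. -/
def mapCGrp (j : Q ↪o P) (n : ℕ) : CGrp K Q n →ₗ[K] CGrp K P n := lmapDomain K K (mapChain j)

lemma mapCGrp_single {n : ℕ} (c : OChain Q n) :
    mapCGrp j n (single c (1 : K)) = single (mapChain j c) 1 := by
  simp [mapCGrp]

lemma mapCGrp_injective (n : ℕ) : Function.Injective (mapCGrp (K := K) j n) :=
  mapDomain_injective fun _ _ h => Subtype.ext (j.injective.comp_left (congrArg Subtype.val h))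

lemma cbdry_mapCGrp {n : ℕ} (u : CGrp K Q (n + 1)) :
    cbdry K P n (mapCGrp j (n + 1) u) = mapCGrp j n (cbdry K Q n u) := by
  have : cbdry K P n ∘ₗ mapCGrp j (n + 1) = mapCGrp j n ∘ₗ cbdry K Q n := by
    ext c : 2
    simp only [LinearMap.comp_apply, lsingle_apply, mapCGrp_single, cbdry_single, map_sum, map_smul]
    rfl
  exact LinearMap.congr_fun this u

lemma mapCGrp_mem (hj : ∀ q, j q < m) {n : ℕ} (u : CGrp K Q n) :
    mapCGrp j n u ∈ supported K K (below m n) := by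
  refine map_mem_of_supported (s := Set.univ) (f := (mapCGrp j n : CGrp K Q n →ₗ[K] _))
    (fun c _ => ?_) (by simp)
  rw [mapCGrp_single]
  exact single_mem_supported K _ fun i => hj _

lemma exists_mapCGrp_eq (hj : ∀ p < m, ∃ q, j q = p) {n : ℕ} {w : CGrp K P n}
    (hw : w ∈ supported K K (below m n)) : ∃ u, mapCGrp j n u = w := by
  refine map_mem_of_supported (f := LinearMap.id) (N := LinearMap.range (mapCGrp j n))
    (fun c hc => ?_) hw
  choose q hq using fun i => hj _ (hc i)
  have hc' : mapChain j ⟨q, fun a b hab => j.lt_iff_lt.1 (by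
      rw [hq, hq]; exact c.2 hab)⟩ = c := Subtype.ext (funext hq)
  exact ⟨_, (mapCGrp_single _).trans (congrArg (single · 1) hc')⟩

lemma exists_cone_mapCGrp_add (hj : ∀ p < m, ∃ q, j q = p) {n : ℕ} {z : CGrp K P (n + 1)}
    (hz : z ∈ supported K K {c : OChain P (n + 1) | c.1 0 ≤ m}) :
    ∃ u, ∃ r ∈ supported K K (below m (n + 1)), cone m n (mapCGrp j n u) + r = z := by
  have : z ∈ LinearMap.range (cone m n ∘ₗ mapCGrp j n) ⊔ supported K K (below m (n + 1)) := by
    refine map_mem_of_supported (f := LinearMap.id) (fun c hc => ?_) hz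
    obtain hb | ⟨c', h, rfl⟩ := mem_below_or_exists_eq_consChain hc
    · exact Submodule.mem_sup_right (single_mem_supported K _ hb)
    · obtain ⟨u, hu⟩ := exists_mapCGrp_eq hj (single_mem_supported K (1 : K) h)
      exact Submodule.mem_sup_left ⟨u, by rw [LinearMap.comp_apply, hu, cone_single h]; rfl⟩
  obtain ⟨_, ⟨u, rfl⟩, r, hr, rfl⟩ := Submodule.mem_sup.1 this
  exact ⟨u, r, hr, rfl⟩

end Cone

section Bar

open LabelledResolution

variable {K} {L : Type} [SemilatticeSup L] [OrderBot L]

/-- The largest element of a chain of elements `> ⊥`, or `⊥` for the empty chain. -/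
def barLabel : ∀ n, OChain {x : L // ⊥ < x} n → L
  | 0, _ => ⊥
  | _ + 1, c => c.1 0

lemma barLabel_lt_iff {n : ℕ} {m : {x : L // ⊥ < x}} (c : OChain {x : L // ⊥ < x} n) :
    barLabel n c < m.1 ↔ c ∈ below m n := by
  match n, c with
  | 0, c => exact ⟨fun _ i => i.elim0, fun _ => m.2⟩
  | n + 1, c => exact ⟨fun h i => (c.2.antitone (Fin.zero_le i)).trans_lt h, fun h => h 0⟩

variable (K L) in
/-- The bar resolution, spanned by the chains of elements `> ⊥`. -/
def bar : LabelledResolution K L where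
  ι n := OChain {x : L // ⊥ < x} n
  label := barLabel
  d n := cbdry K _ n
  nonempty_zero := ⟨⟨fun i => i.elim0, fun i => i.elim0⟩⟩
  subsingleton_zero := ⟨fun _ _ => Subtype.ext (funext fun i => i.elim0)⟩
  label_zero _ := rfl
  bot_lt_label _ c := (c.1 0).2
  d_single_mem n c := by
    rw [cbdry_single]
    refine sum_mem fun k _ => Submodule.smul_mem _ _ (single_mem_supported K _ ?_)
    match n with
    | 0 => exact bot_le
    | n + 1 => exact c.2.antitone (Fin.zero_le _)
  d_d := cbdry_cbdry
  exact_zero z hz x _ := ⟨cone ⟨z, hz⟩ 0 x, cone_mem x, cbdry_zero_cone x⟩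
  exact_succ n z hz x hx hd := ⟨cone ⟨z, hz⟩ (n + 1) x, cone_mem x, by
    have := cbdry_cone_add_cone_cbdry (z := (⟨z, hz⟩ : {x : L // ⊥ < x})) hx
    rwa [hd, map_zero, add_zero] at this⟩

lemma bar_filLT (n : ℕ) (m : {x : L // ⊥ < x}) :
    (bar K L).filLT n m.1 = supported K K (below m n) :=
  congrArg (supported K K) (Set.ext barLabel_lt_iff)

variable {Q : Type} [PartialOrder Q] {m : {x : L // ⊥ < x}}

/-- The part of label `m` of the bar resolution computes the reduced homology of the open interval
`(⊥, m)`. -/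
theorem bar_acyclicAt_iff (j : Q ↪o {x : L // ⊥ < x}) (hj : ∀ p, p < m ↔ ∃ q, j q = p) (k : ℕ) :
    (bar K L).AcyclicAt m.1 (k + 1) ↔ cyclesAt K Q k ≤ boundariesIn K Q k := by
  have hlt : ∀ q, j q < m := fun q => (hj _).2 ⟨q, rfl⟩
  have hex : ∀ p < m, ∃ q, j q = p := fun p => (hj p).1
  have hd0 : ∀ n (u : CGrp K Q (n + 1)), cbdry K _ (n + 1) (cone m (n + 1) (mapCGrp j (n + 1) u)) =
      mapCGrp j (n + 1) u - cone m n (mapCGrp j n (cbdry K Q n u)) := fun n u => by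
    rw [cbdry_succ_cone (mapCGrp_mem hlt u), cbdry_mapCGrp]
  have hzero : ∀ n (u : CGrp K Q n),
      cone m n (mapCGrp j n u) ∈ supported K K (below m (n + 1)) → u = 0 := fun n u hu =>
    mapCGrp_injective n ((eq_zero_of_cone_mem_below (mapCGrp_mem hlt u) hu).trans
      (map_zero _).symm)
  unfold AcyclicAt ClosedAt
  simp only [bar_filLT]
  constructor
  · intro h u hu
    have hd : cbdry K _ k (cone m k (mapCGrp j k u)) = mapCGrp j k u := by
      match k, u, hu with
      | 0, u, _ => exact cbdry_zero_cone _
      | k + 1, u, hu =>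
        rw [hd0, show cbdry K Q k u = 0 from hu, map_zero, map_zero, sub_zero]
    obtain ⟨t, ht, htz⟩ := h (cone m k (mapCGrp j k u)) (cone_mem _)
      (hd.symm ▸ mapCGrp_mem hlt u : cbdry K _ k (cone m k (mapCGrp j k u)) ∈ _)
    obtain ⟨v, r, hr, rfl⟩ := exists_cone_mapCGrp_add hex ht
    have key : u + cbdry K Q k v = 0 := by
      apply hzero
      have e : cone m k (mapCGrp j k (u + cbdry K Q k v)) = cone m k (mapCGrp j k u) -
          cbdry K _ (k + 1) (cone m (k + 1) (mapCGrp j (k + 1) v) + r) +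
          cbdry K _ (k + 1) r + mapCGrp j (k + 1) v := by
        rw [map_add, map_add, map_add, hd0]
        abel
      rw [e]
      exact add_mem (add_mem htz (cbdry_mem_below hr)) (mapCGrp_mem hlt v)
    exact ⟨-v, by rw [map_neg, eq_neg_of_add_eq_zero_left key]⟩
  · intro h z hz hc
    obtain ⟨u, r, hr, rfl⟩ := exists_cone_mapCGrp_add hex hz
    change cbdry K _ k _ ∈ _ at hc
    have hu : u ∈ cyclesAt K Q k := by
      match k, u, r, hr, hc with
      | 0, _, _, _, _ => trivial
      | k + 1, u, r, hr, hc =>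
        apply hzero
        rw [map_add, hd0] at hc
        have h1 := sub_mem (add_mem (mapCGrp_mem hlt u) (cbdry_mem_below hr)) hc
        convert h1 using 1
        abel
    obtain ⟨v, rfl⟩ := h hu
    refine ⟨-cone m (k + 1) (mapCGrp j (k + 1) v), neg_mem (cone_mem _), ?_⟩
    have e : cone m k (mapCGrp j k (cbdry K Q k v)) + r -
        cbdry K _ (k + 1) (-cone m (k + 1) (mapCGrp j (k + 1) v)) =
        r + mapCGrp j (k + 1) v := by
      rw [map_neg, hd0]
      abel
    exact e ▸ add_mem hr (mapCGrp_mem hlt v)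

end Bar

section Main

open LabelledResolution

variable {K}

theorem exists_sup_eq_of_not_acyclicAt {L : Type} [SemilatticeSup L] [OrderBot L]
    [WellFoundedLT L] {m : L} {a b : ℕ}
    (h : ¬ (bar K L).AcyclicAt m (a + 1 + (b + 1))) :
    ∃ x y, ⊥ < x ∧ ⊥ < y ∧ ¬ (bar K L).AcyclicAt x (a + 1) ∧ ¬ (bar K L).AcyclicAt y (b + 1) ∧
      x ⊔ y = m := by
  obtain ⟨F, hF⟩ := exists_isMinimal K L
  have hlabel : ∀ n (i : F.ι n), ¬ (bar K L).AcyclicAt (F.label n i) n := fun n i hi =>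
    hF.label_ne (hi.biclosedLift (Y := F)).zero_left.acyclicAt i rfl
  by_contra! hne
  refine h (AcyclicAt.biclosedLift (X := F) ?_).zero_left.acyclicAt
  exact (biclosedLift_of_forall_ne (X := F) fun i j => hne _ _ (F.bot_lt_label a i)
    (F.bot_lt_label b j) (hlabel _ i) (hlabel _ j)).zero_left.acyclicAt

lemma finrank_cyclesAt_sub_ne_zero_iff {Q : Type} [PartialOrder Q] [Finite Q] (k : ℕ) :
    Module.finrank K (cyclesAt K Q k) - Module.finrank K (boundariesIn K Q k) ≠ 0 ↔
      RHomNontrivial K Q k := by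
  have : Finite (OChain Q k) := inferInstanceAs (Finite {c : Fin k → Q // StrictAnti c})
  have hle : boundariesIn K Q k ≤ cyclesAt K Q k := by
    match k with
    | 0 => exact le_top
    | k + 1 =>
      rintro _ ⟨u, rfl⟩
      exact cbdry_cbdry k u
  rw [RHomNontrivial, ne_eq, Nat.sub_eq_zero_iff_le]
  exact not_congr ⟨fun h => (Submodule.eq_of_le_of_finrank_le hle h).ge, Submodule.finrank_mono⟩

variable {nv : ℕ} (I : Ideal (PolyS K nv))

lemma finite_minGens : (minGens K nv I).Finite :=
  WellQuasiOrderedLE.finite_of_isAntichain fun d hd _ hd' hne hle =>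
    hd'.2 d (lt_of_le_of_ne hle hne) hd.1

lemma finite_lcmSet : (lcmSet K nv I).Finite := by
  classical
  refine ((finite_minGens I).toFinset.powerset.image fun B => B.sup id).finite_toSet.subset ?_
  rintro _ ⟨B, hB, rfl⟩
  simp only [Finset.coe_image, Set.mem_image, Finset.mem_coe, Finset.mem_powerset]
  exact ⟨B, fun d hd => (finite_minGens I).mem_toFinset.2 (hB hd), rfl⟩

lemma sup_mem_lcmSet {x y : Fin nv → ℕ} (hx : x ∈ lcmSet K nv I) (hy : y ∈ lcmSet K nv I) :
    x ⊔ y ∈ lcmSet K nv I := by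
  classical
  obtain ⟨B, hB, rfl⟩ := hx
  obtain ⟨C, hC, rfl⟩ := hy
  exact ⟨B ∪ C, by simp [hB, hC], (Finset.sup_union).symm⟩

instance : SemilatticeSup (lcmSet K nv I) :=
  Subtype.semilatticeSup fun _ _ hx hy => sup_mem_lcmSet I hx hy

instance : OrderBot (lcmSet K nv I) where
  bot := ⟨0, ∅, by simp, rfl⟩
  bot_le x := Subtype.coe_le_coe.1 (zero_le (a := x.1))

instance : Finite (lcmSet K nv I) := finite_lcmSet I

instance (m : Fin nv → ℕ) : Finite (openInt K nv I m) :=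
  (finite_lcmSet I).subset fun _ h => h.1

lemma multiBetti_succ_ne_zero_iff {k : ℕ} {m : Fin nv → ℕ} :
    multiBetti K nv I (k + 1) m ≠ 0 ↔
      ∃ x : lcmSet K nv I, ⊥ < x ∧ x.1 = m ∧ ¬ (bar K (lcmSet K nv I)).AcyclicAt x (k + 1) := by
  have key : ∀ x : lcmSet K nv I, ⊥ < x →
      (¬ (bar K (lcmSet K nv I)).AcyclicAt x (k + 1) ↔
        RHomNontrivial K (openInt K nv I x.1) k) := by
    intro x hx
    let j : openInt K nv I x.1 ↪o {y : lcmSet K nv I // ⊥ < y} :=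
      { toFun := fun q => ⟨⟨q.1, q.2.1⟩, q.2.2.1⟩
        inj' := fun q q' h => Subtype.ext (congrArg (fun y => y.1.1) h)
        map_rel_iff' := Iff.rfl }
    refine not_congr (bar_acyclicAt_iff (m := ⟨x, hx⟩) j (fun p => ⟨fun h => ?_, ?_⟩) k)
    · exact ⟨⟨p.1.1, p.1.2, p.2, h⟩, rfl⟩
    · rintro ⟨q, rfl⟩
      exact q.2.2.2
  rw [multiBetti, if_neg (Nat.succ_ne_zero k)]
  split_ifs with h
  · have hpos : (⊥ : lcmSet K nv I) < ⟨m, h.1⟩ := pos_of_ne_zero h.2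
    rw [Nat.add_sub_cancel, finrank_cyclesAt_sub_ne_zero_iff, ← key ⟨m, h.1⟩ hpos]
    exact ⟨fun hm => ⟨_, hpos, rfl, hm⟩, by rintro ⟨_, _, rfl, hm⟩; exact hm⟩
  · simp only [ne_eq, not_true_eq_false, false_iff]
    rintro ⟨x, hx, rfl, -⟩
    exact h ⟨x.2, fun h0 => hx.ne' (Subtype.ext h0)⟩

lemma acount_zero : acount K nv I 0 = 1 := by
  simp [acount, multiBetti]

end Main

/-- Let `I` be a monomial ideal in `S = K[x₁, …, xₙ]` and let
`a_i(S/I)` be the number of multidegrees `m` with `β_{i,m}(S/I) ≠ 0`.  Then for all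
`i₁, i₂ ≥ 0` one has `a_{i₁+i₂}(S/I) ≤ a_{i₁}(S/I) · a_{i₂}(S/I)`. -/
theorem count_multigraded_shifts_submultiplicative (nv : ℕ) (I : Ideal (PolyS K nv))
    (hI : IsMonomialIdeal K nv I) (i₁ i₂ : ℕ) :
    acount K nv I (i₁ + i₂) ≤ acount K nv I i₁ * acount K nv I i₂ := by
  match i₁, i₂ with
  | 0, b => rw [acount_zero, zero_add, one_mul]
  | a + 1, 0 => rw [acount_zero, add_zero, mul_one]
  | a + 1, b + 1 =>
    have hfin : ∀ k, {m | multiBetti K nv I (k + 1) m ≠ 0}.Finite := fun k =>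
      (finite_lcmSet I).subset fun m hm => by
        obtain ⟨x, -, rfl, -⟩ := (multiBetti_succ_ne_zero_iff I).1 hm
        exact x.2
    rw [acount, acount, acount, ← Set.ncard_prod]
    refine (Set.ncard_le_ncard ?_ (((hfin a).prod (hfin b)).image _)).trans
      (Set.ncard_image_le (f := fun p => p.1 ⊔ p.2) ((hfin a).prod (hfin b)))
    intro m hm
    obtain ⟨z, -, rfl, hz⟩ := (multiBetti_succ_ne_zero_iff (k := a + 1 + b) I).1 hm
    obtain ⟨x, y, hx, hy, hxa, hyb, rfl⟩ := exists_sup_eq_of_not_acyclicAt hz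
    exact ⟨(x.1, y.1), ⟨(multiBetti_succ_ne_zero_iff I).2 ⟨x, hx, rfl, hxa⟩,
      (multiBetti_succ_ne_zero_iff I).2 ⟨y, hy, rfl, hyb⟩⟩, rfl⟩

end
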